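/- arXiv:1202.4406 — 2 statements merged into one kernel-verified Lean document; each statement's English description precedes it below -/
import Mathlib

section
/- If G is a connected proper circular-arc graph whose complement is not bipartite, then the closed neighborhood hypergraph N[G] is strictly connected. -/
/-!
Two intersecting arcs are such that one of them contains the start of the other, and in a proper
model an arc starting inside the arc of `v` contains the last point of the arc of `v`.

Suppose that no arc starts strictly between the start of the arc of `u` and that of the arc of `v`.
If `N[u] ∪ N[v]` were the whole vertex set, every arc would contain the start of the arc of `u` or
the last point of the arc of `v`: an arc starting in that of `u` starts at the same point or inside
that of `v`, and an arc reaching the start of `v` starts there or already contains the start of `u`.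
The vertices whose arcs contain a fixed point form a clique, so the complement of the graph would be
bipartite. Hence `N[u]` and `N[v]` intersect strictly whenever they intersect, and, taking `u = v`,
no closed neighborhood is the whole vertex set. For adjacent `u` and `v`, stepping through the
starts in between yields a chain of strictly intersecting neighborhoods.
-/

open Set

/-- The closed neighborhood of a vertex: the vertex together with its neighbors. -/
def ClosedNbhd {V : Type*} (G : SimpleGraph V) (v : V) : Set V :=
  {u | u = v ∨ G.Adj u v}

/-- `S` is an interval (order-convex set) with respect to the order relation `r`. -/
def IsIntervalWrt {α : Type*} (r : α → α → Prop) (S : Set α) : Prop :=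
  ∀ x y z, r x y → r y z → x ∈ S → z ∈ S → y ∈ S

/-- A family of hyperedges forms an interval hypergraph: some linear order on the
vertices makes every hyperedge an interval (a set of consecutive elements). -/
def IsIntervalHypergraph {α ι : Type*} (H : ι → Set α) : Prop :=
  ∃ r : α → α → Prop, IsLinearOrder α r ∧ ∀ i, IsIntervalWrt r (H i)

/-- `S ⊆ ZMod n` is an arc: a set of (at most `n`) circularly consecutive points. -/
def IsArc (n : ℕ) (S : Set (ZMod n)) : Prop :=
  ∃ a : ZMod n, ∃ k : ℕ, k ≤ n ∧ S = {x | ∃ i : ℕ, i < k ∧ x = a + (i : ZMod n)}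

/-- Arcs `A` and `B` share their start point: some point is a start point of both. -/
def SharesStart (n : ℕ) (A B : Set (ZMod n)) : Prop :=
  ∃ a, a ∈ A ∧ a - 1 ∉ A ∧ a ∈ B ∧ a - 1 ∉ B

/-- Arcs `A` and `B` share their end point: some point is an end point of both. -/
def SharesEnd (n : ℕ) (A B : Set (ZMod n)) : Prop :=
  ∃ a, a ∈ A ∧ a + 1 ∉ A ∧ a ∈ B ∧ a + 1 ∉ B

/-- `G` is a proper interval graph: it has an intersection model consisting of
nonempty integer intervals that are pairwise incomparable under inclusion. -/
def IsProperIntervalGraph {V : Type*} (G : SimpleGraph V) : Prop :=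
  ∃ l : V → Set ℤ,
    (∀ v, ∃ a b : ℤ, a ≤ b ∧ l v = Set.Icc a b) ∧
    (∀ u v, u ≠ v → ¬ l u ⊆ l v) ∧
    (∀ u v, u ≠ v → (G.Adj u v ↔ (l u ∩ l v).Nonempty))

/-- `G` is a circular-arc graph: it has an intersection model consisting of
nonempty arcs of some circle `ZMod n`. -/
def IsCAGraph {V : Type*} (G : SimpleGraph V) : Prop :=
  ∃ n : ℕ, 0 < n ∧ ∃ l : V → Set (ZMod n),
    Function.Injective l ∧
    (∀ v, (l v).Nonempty ∧ IsArc n (l v)) ∧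
    (∀ u v, u ≠ v → (G.Adj u v ↔ (l u ∩ l v).Nonempty))

/-- `G` is a proper circular-arc graph: it has an intersection model consisting of
nonempty arcs of some circle `ZMod n`, pairwise incomparable under inclusion. -/
def IsPCAGraph {V : Type*} (G : SimpleGraph V) : Prop :=
  ∃ n : ℕ, 0 < n ∧ ∃ l : V → Set (ZMod n),
    Function.Injective l ∧
    (∀ v, (l v).Nonempty ∧ IsArc n (l v)) ∧
    (∀ u v, u ≠ v → ¬ l u ⊆ l v) ∧
    (∀ u v, u ≠ v → (G.Adj u v ↔ (l u ∩ l v).Nonempty))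

/-- `G` is bipartite: the vertex set splits into two independent sets. -/
def IsBipartite {V : Type*} (G : SimpleGraph V) : Prop :=
  ∃ U : Set V, (∀ u ∈ U, ∀ v ∈ U, ¬ G.Adj u v) ∧ (∀ u ∉ U, ∀ v ∉ U, ¬ G.Adj u v)

/-- The hypergraph `H` is strictly connected: no isolated vertex, neither `∅` nor the
whole vertex set is a hyperedge, and the graph on the hyperedges with the strict
intersection relation `⋈*` is connected. -/
def StrictlyConnectedHypergraph {V : Type*} (H : Set (Set V)) : Prop :=
  (∀ x : V, ∃ A ∈ H, x ∈ A) ∧ ∅ ∉ H ∧ Set.univ ∉ H ∧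
  ∀ A ∈ H, ∀ B ∈ H, Relation.ReflTransGen
    (fun X Y => X ∈ H ∧ Y ∈ H ∧ (X ∩ Y).Nonempty ∧
      (X ⊆ Y ∨ Y ⊆ X ∨ X ∪ Y ≠ Set.univ)) A B

section Arc

variable {R : Type*} [AddGroupWithOne R] {a b : R} {d i j k l : ℕ}

/-- The arc of the `k` consecutive points `a, a + 1, …, a + (k - 1)`; for `R = ZMod n` with `k ≤ n`
it is an arc in the sense of `IsArc`. -/
def arcFrom (a : R) (k : ℕ) : Set R :=
  {x | ∃ i : ℕ, i < k ∧ x = a + (i : R)}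

theorem add_natCast_eq_add_natCast_iff_of_le (h : i ≤ j) :
    a + (i : R) = b + (j : R) ↔ a = b + ((j - i : ℕ) : R) := by
  conv_lhs => rw [← Nat.sub_add_cancel h, Nat.cast_add, ← add_assoc, add_left_inj]

theorem mem_arcFrom_self (hk : 0 < k) : a ∈ arcFrom a k :=
  ⟨0, hk, by simp⟩

theorem arcFrom_add_natCast_subset (h : d + l ≤ k) : arcFrom (a + (d : R)) l ⊆ arcFrom a k := by
  rintro _ ⟨i, hi, rfl⟩
  exact ⟨d + i, by omega, by rw [Nat.cast_add, add_assoc]⟩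

theorem arcFrom_inter_nonempty_iff (hk : 0 < k) (hl : 0 < l) :
    (arcFrom a k ∩ arcFrom b l).Nonempty ↔ b ∈ arcFrom a k ∨ a ∈ arcFrom b l := by
  constructor
  · rintro ⟨_, ⟨i, hi, rfl⟩, j, hj, hij⟩
    rcases le_total i j with h | h
    · exact .inr ⟨j - i, by omega, (add_natCast_eq_add_natCast_iff_of_le h).1 hij⟩
    · exact .inl ⟨i - j, by omega, (add_natCast_eq_add_natCast_iff_of_le h).1 hij.symm⟩
  · rintro (h | h)
    · exact ⟨b, h, mem_arcFrom_self hl⟩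
    · exact ⟨a, mem_arcFrom_self hk, h⟩

end Arc

theorem mem_closedNbhd_self {V : Type*} (G : SimpleGraph V) (v : V) : v ∈ ClosedNbhd G v :=
  .inl rfl

theorem isBipartite_compl_of_isClique {V : Type*} {G : SimpleGraph V} {S T : Set V}
    (hS : G.IsClique S) (hT : G.IsClique T) (hST : S ∪ T = univ) : IsBipartite Gᶜ := by
  refine ⟨S, fun u hu v hv h => h.2 (hS hu hv h.1), fun u hu v hv h => h.2 (hT ?_ ?_ h.1)⟩
  · exact (hST.ge (mem_univ u)).resolve_left hu
  · exact (hST.ge (mem_univ v)).resolve_left hv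

/-- The strict intersection relation `⋈*` between hyperedges. -/
def StrictlyIntersect {V : Type*} (A B : Set V) : Prop :=
  (A ∩ B).Nonempty ∧ (A ⊆ B ∨ B ⊆ A ∨ A ∪ B ≠ univ)

instance StrictlyIntersect.stdSymm {V : Type*} : Std.Symm (StrictlyIntersect (V := V)) where
  symm A B h := by
    refine ⟨inter_comm A B ▸ h.1, ?_⟩
    rw [union_comm B A]
    exact or_left_comm.1 h.2

/-- A proper arc model of `G`: vertices are represented by pairwise incomparable nonempty arcs, with
adjacency given by intersection. Arcs are recorded by their start and length, since these are not
determined by the underlying set when an arc covers the whole circle. -/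
structure ProperArcModel {V : Type*} (G : SimpleGraph V) (R : Type*) [AddGroupWithOne R] where
  start : V → R
  len : V → ℕ
  len_pos : ∀ v, 0 < len v
  eq_of_subset : ∀ u v, arcFrom (start u) (len u) ⊆ arcFrom (start v) (len v) → u = v
  adj_iff : ∀ u v, u ≠ v →
    (G.Adj u v ↔ (arcFrom (start u) (len u) ∩ arcFrom (start v) (len v)).Nonempty)

theorem IsPCAGraph.exists_properArcModel {V : Type*} {G : SimpleGraph V} (h : IsPCAGraph G) :
    ∃ n, Nonempty (ProperArcModel G (ZMod n)) := by
  obtain ⟨n, -, l, -, harc, hincomp, hadj⟩ := h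
  choose hne start len _ hl using harc
  obtain rfl : l = fun v => arcFrom (start v) (len v) := funext hl
  refine ⟨n, ⟨⟨start, len, fun v => ?_, fun u v huv => ?_, hadj⟩⟩⟩
  · obtain ⟨_, i, hi, -⟩ := hne v
    exact Nat.zero_lt_of_lt hi
  · exact not_imp_not.1 (hincomp u v) huv

namespace ProperArcModel

variable {V : Type*} {G : SimpleGraph V} {R : Type*} [AddGroupWithOne R]
  (M : ProperArcModel G R) {u v w : V} {d : ℕ}

/-- The arc representing `v`. -/
def arc (v : V) : Set R :=
  arcFrom (M.start v) (M.len v)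

/-- The last point of the arc representing `v`. -/
def last (v : V) : R :=
  M.start v + ((M.len v - 1 : ℕ) : R)

theorem start_mem_arc (v : V) : M.start v ∈ M.arc v :=
  mem_arcFrom_self (M.len_pos v)

theorem mem_closedNbhd_iff :
    w ∈ ClosedNbhd G v ↔ M.start w ∈ M.arc v ∨ M.start v ∈ M.arc w := by
  rcases eq_or_ne w v with rfl | hwv
  · simp only [mem_closedNbhd_self, start_mem_arc, or_self]
  · calc w ∈ ClosedNbhd G v ↔ G.Adj w v := or_iff_right hwv
      _ ↔ M.start v ∈ M.arc w ∨ M.start w ∈ M.arc v := by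
        rw [M.adj_iff w v hwv, arcFrom_inter_nonempty_iff (M.len_pos w) (M.len_pos v)]
        rfl
      _ ↔ _ := or_comm

theorem isClique_setOf_mem_arc (x : R) : G.IsClique {v | x ∈ M.arc v} :=
  fun u hu v hv huv => (M.adj_iff u v huv).2 ⟨x, hu, hv⟩

theorem exists_notMem_arc_of_not_isBipartite_compl (hG : ¬ IsBipartite Gᶜ) (x y : R) :
    ∃ w, x ∉ M.arc w ∧ y ∉ M.arc w := by
  by_contra! h
  exact hG <| isBipartite_compl_of_isClique (M.isClique_setOf_mem_arc x)
    (M.isClique_setOf_mem_arc y) <| eq_univ_of_forall fun w => or_iff_not_imp_left.2 (h w)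

theorem len_le_add_len (h : M.start w = M.start v + (d : R)) : M.len v ≤ d + M.len w := by
  by_contra! hlt
  have hwv : w = v := M.eq_of_subset w v (h ▸ arcFrom_add_natCast_subset hlt.le)
  subst hwv
  omega

theorem last_mem_arc_of_start_mem_arc (h : M.start w ∈ M.arc v) : M.last v ∈ M.arc w := by
  obtain ⟨e, he, hw⟩ := h
  have hlen := M.len_le_add_len hw
  refine ⟨M.len v - 1 - e, by omega, ?_⟩
  rw [hw, add_assoc, ← Nat.cast_add, Nat.add_sub_cancel' (by omega), last]

section Consecutive

variable (hd : M.start v = M.start u + (d : R))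
  (hgap : ∀ e : ℕ, 0 < e → e < d → M.start u + (e : R) ∉ range M.start)
include hd hgap

theorem start_mem_arc_or_last_mem_arc_of_mem_closedNbhd_left (hw : w ∈ ClosedNbhd G u) :
    M.start u ∈ M.arc w ∨ M.last v ∈ M.arc w := by
  rcases M.mem_closedNbhd_iff.1 hw with ⟨e, he, hwu⟩ | hu
  · rcases e.eq_zero_or_pos with rfl | he0
    · have hwu : M.start w = M.start u := by simpa only [Nat.cast_zero, add_zero] using hwu
      exact .inl (hwu ▸ M.start_mem_arc w)
    have hde : d ≤ e := not_lt.1 fun hlt => hgap e he0 hlt ⟨w, hwu⟩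
    have hlen := M.len_le_add_len hd
    refine .inr (M.last_mem_arc_of_start_mem_arc ⟨e - d, by omega, ?_⟩)
    rw [hwu, hd, add_assoc, ← Nat.cast_add, Nat.add_sub_cancel' hde]
  · exact .inl hu

theorem start_mem_arc_or_last_mem_arc_of_mem_closedNbhd_right (hw : w ∈ ClosedNbhd G v) :
    M.start u ∈ M.arc w ∨ M.last v ∈ M.arc w := by
  rcases M.mem_closedNbhd_iff.1 hw with hwv | ⟨f, hf, hvw⟩
  · exact .inr (M.last_mem_arc_of_start_mem_arc hwv)
  have huw : M.start u + (d : R) = M.start w + (f : R) := hd.symm.trans hvw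
  rcases le_or_gt d f with hdf | hfd
  · exact .inl ⟨f - d, by omega, (add_natCast_eq_add_natCast_iff_of_le hdf).1 huw⟩
  have hwu : M.start w = M.start u + ((d - f : ℕ) : R) :=
    (add_natCast_eq_add_natCast_iff_of_le hfd.le).1 huw.symm
  rcases f.eq_zero_or_pos with rfl | hf0
  · refine .inr (M.last_mem_arc_of_start_mem_arc ?_)
    rw [hwu, Nat.sub_zero, ← hd]
    exact M.start_mem_arc v
  · exact absurd ⟨w, hwu⟩ (hgap (d - f) (by omega) (by omega))

theorem closedNbhd_union_ne_univ (hG : ¬ IsBipartite Gᶜ) :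
    ClosedNbhd G u ∪ ClosedNbhd G v ≠ univ := by
  obtain ⟨w, hu, hv⟩ := M.exists_notMem_arc_of_not_isBipartite_compl hG (M.start u) (M.last v)
  refine (ne_univ_iff_exists_notMem _).2 ⟨w, ?_⟩
  rintro (hw | hw)
  · exact (M.start_mem_arc_or_last_mem_arc_of_mem_closedNbhd_left hd hgap hw).elim hu hv
  · exact (M.start_mem_arc_or_last_mem_arc_of_mem_closedNbhd_right hd hgap hw).elim hu hv

end Consecutive

include M in
theorem closedNbhd_ne_univ (hG : ¬ IsBipartite Gᶜ) (v : V) : ClosedNbhd G v ≠ univ := by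
  have h := M.closedNbhd_union_ne_univ (u := v) (v := v) (d := 0) (by simp)
    (fun e _ he => absurd he (Nat.not_lt_zero e)) hG
  rwa [union_self] at h

theorem reflTransGen_strictlyIntersect_of_start_mem_arc (hG : ¬ IsBipartite Gᶜ)
    (h : M.start v ∈ M.arc u) :
    Relation.ReflTransGen (Function.onFun StrictlyIntersect (ClosedNbhd G)) u v := by
  obtain ⟨d, hd, huv⟩ := h
  induction d using Nat.strong_induction_on generalizing u v with
  | _ d ih =>
    by_cases hgap : ∀ e : ℕ, 0 < e → e < d → M.start u + (e : R) ∉ range M.start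
    · have hu : u ∈ ClosedNbhd G v := M.mem_closedNbhd_iff.2 (.inr ⟨d, hd, huv⟩)
      exact .single ⟨⟨u, mem_closedNbhd_self G u, hu⟩,
        .inr (.inr (M.closedNbhd_union_ne_univ huv hgap hG))⟩
    · push Not at hgap
      obtain ⟨e, he0, hed, w, huw⟩ := hgap
      have hlen := M.len_le_add_len huw
      have hwv : M.start v = M.start w + ((d - e : ℕ) : R) := by
        rw [huv, huw, add_assoc, ← Nat.cast_add, Nat.add_sub_cancel' hed.le]
      exact (ih e hed (by omega) huw).trans (ih (d - e) (by omega) (by omega) hwv)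

include M in
theorem reflTransGen_strictlyIntersect_of_adj (hG : ¬ IsBipartite Gᶜ) (h : G.Adj u v) :
    Relation.ReflTransGen (Function.onFun StrictlyIntersect (ClosedNbhd G)) u v := by
  rcases M.mem_closedNbhd_iff.1 (.inr h) with hu | hv
  · have : Std.Symm (Function.onFun StrictlyIntersect (ClosedNbhd G)) := ⟨fun _ _ => symm⟩
    exact symm (M.reflTransGen_strictlyIntersect_of_start_mem_arc hG hu)
  · exact M.reflTransGen_strictlyIntersect_of_start_mem_arc hG hv

end ProperArcModel

/-- If `G` is a connected proper circular-arc graph whose complement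
is not bipartite, then its closed neighborhood hypergraph is strictly connected. -/
theorem stmt15 {V : Type*} [Fintype V] (G : SimpleGraph V)
    (hconn : G.Connected) (hpca : IsPCAGraph G) (hnb : ¬ IsBipartite Gᶜ) :
    StrictlyConnectedHypergraph (Set.range fun v => ClosedNbhd G v) := by
  obtain ⟨n, ⟨M⟩⟩ := hpca.exists_properArcModel
  refine ⟨fun v => ⟨_, ⟨v, rfl⟩, mem_closedNbhd_self G v⟩, ?_, ?_, ?_⟩
  · rintro ⟨v, hv⟩
    exact hv.le (mem_closedNbhd_self G v)
  · rintro ⟨v, hv⟩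
    exact M.closedNbhd_ne_univ hnb v hv
  · rintro _ ⟨u, rfl⟩ _ ⟨v, rfl⟩
    have huv : Relation.ReflTransGen G.Adj u v :=
      (SimpleGraph.reachable_iff_reflTransGen u v).1 (hconn.preconnected u v)
    have hchain := huv.lift' id fun _ _ => M.reflTransGen_strictlyIntersect_of_adj hnb
    exact hchain.lift (ClosedNbhd G) fun u v h => ⟨⟨u, rfl⟩, ⟨v, rfl⟩, h⟩
end

section
/- Let G be a proper interval graph on a finite vertex set V and let H be any simple graph on the same vertex set V. If the closed neighborhood hypergraphs coincide as hypergraphs with multiplicities — that is, there is a permutation σ of V with N_H[v] = N_G[σ(v)] for every v ∈ V — then H = G. -/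
/-!
Write `N[v]` for closed neighborhoods in `G`. That `v ↦ N[σ v]` is again a family of closed
neighborhoods means that `v ∈ N[σ v]` and that `σ` is self-adjoint: `u ∈ N[σ v] ↔ σ u ∈ N[v]`.
Moving powers of `σ` across, every `σ`-orbit is a clique of `G`; cliques are finite, since
incomparable integer intervals have distinct left endpoints and distinct right endpoints.

Order the vertices by left endpoints. If `N[w] ⊆ N[σ w]` fails, there are `u < w`, up to exchanging
the two, with `u ∈ N[w]` and `u ∉ N[σ w]`. As neighborhoods are convex, this forces `σ u < u`, and
the pair `(σ u, σ⁻¹ w)` is again of this kind. Hence `u > σ u > σ² u > ⋯` inside a finite orbit,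
which is absurd. So `N[w] ⊆ N[σ w]`, and the reverse inclusion is the same fact for `σ⁻¹`.
-/

open Set

section ClosedNbhd

variable {V : Type*} {G : SimpleGraph V} {u v : V}

theorem self_mem_closedNbhd (G : SimpleGraph V) (v : V) : v ∈ ClosedNbhd G v :=
  Or.inl rfl

theorem mem_closedNbhd_comm : u ∈ ClosedNbhd G v ↔ v ∈ ClosedNbhd G u := by
  simp only [ClosedNbhd, Set.mem_ofPred_eq, G.adj_comm u v, eq_comm]

theorem mem_closedNbhd_iff_adj (huv : u ≠ v) : u ∈ ClosedNbhd G v ↔ G.Adj u v :=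
  or_iff_right huv

theorem closedNbhd_injective :
    Function.Injective (ClosedNbhd : SimpleGraph V → V → Set V) := by
  intro G H hGH
  ext u v
  rcases eq_or_ne u v with rfl | huv
  · simp only [SimpleGraph.irrefl]
  · rw [← mem_closedNbhd_iff_adj huv, hGH, mem_closedNbhd_iff_adj huv]

end ClosedNbhd

/-- The linear order on the vertices is an umbrella ordering of `G`, the order-theoretic form of a
proper interval model: a closed adjacency `x ≤ z` extends from every vertex in between to both
ends. -/
def IsUmbrellaOrdered {V : Type*} [LE V] (G : SimpleGraph V) : Prop :=
  ∀ ⦃x y z : V⦄, x ≤ y → y ≤ z → x ∈ ClosedNbhd G z →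
    y ∈ ClosedNbhd G x ∧ y ∈ ClosedNbhd G z

/-- Endpoint form of a proper interval model: `[a v, b v]` represents `v`, and no such interval is
nested in another. Nonemptiness of the intervals is `mem_iff` for `u = v`. -/
structure IsProperEndpointModel {V α : Type*} [LE α] (G : SimpleGraph V) (a b : V → α) :
    Prop where
  eq_of_nested : ∀ u v, a v ≤ a u → b u ≤ b v → u = v
  mem_iff : ∀ u v, u ∈ ClosedNbhd G v ↔ a u ≤ b v ∧ a v ≤ b u

theorem IsProperIntervalGraph.exists_endpointModel {V : Type*} {G : SimpleGraph V}
    (hG : IsProperIntervalGraph G) : ∃ a b : V → ℤ, IsProperEndpointModel G a b := by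
  obtain ⟨l, hIcc, hincomp, hadj⟩ := hG
  choose a b hab hl using hIcc
  refine ⟨a, b, fun u v ha hb ↦ ?_, fun u v ↦ ?_⟩
  · by_contra huv
    refine hincomp u v huv ?_
    rw [hl, hl]
    exact Set.Icc_subset_Icc ha hb
  · rcases eq_or_ne u v with rfl | huv
    · simp only [self_mem_closedNbhd, hab, and_self]
    · rw [mem_closedNbhd_iff_adj huv, hadj u v huv, hl, hl, Set.Icc_inter_Icc, Set.nonempty_Icc,
        sup_le_iff, le_inf_iff, le_inf_iff]
      have hu := hab u
      have hv := hab v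
      tauto

namespace IsProperEndpointModel

variable {V α : Type*} [LinearOrder α] {G : SimpleGraph V} {a b : V → α} {u v : V}

theorem left_le_right (hM : IsProperEndpointModel G a b) (v : V) : a v ≤ b v :=
  ((hM.mem_iff v v).mp (self_mem_closedNbhd G v)).1

theorem left_injective (hM : IsProperEndpointModel G a b) : Function.Injective a := by
  intro u v huv
  rcases le_total (b u) (b v) with hb | hb
  · exact hM.eq_of_nested u v huv.ge hb
  · exact (hM.eq_of_nested v u huv.le hb).symm

theorem right_injective (hM : IsProperEndpointModel G a b) : Function.Injective b := by
  intro u v huv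
  rcases le_total (a u) (a v) with ha | ha
  · exact (hM.eq_of_nested v u ha huv.ge).symm
  · exact hM.eq_of_nested u v ha huv.le

theorem right_le_right (hM : IsProperEndpointModel G a b) (huv : a u ≤ a v) : b u ≤ b v := by
  by_contra! hlt
  exact hlt.ne (congrArg b (hM.eq_of_nested v u huv hlt.le))

theorem finite_closedNbhd [LocallyFiniteOrder α] (hM : IsProperEndpointModel G a b) (v : V) :
    (ClosedNbhd G v).Finite := by
  have hleft := (Set.finite_Icc (a v) (b v)).preimage hM.left_injective.injOn
  have hright := (Set.finite_Icc (a v) (b v)).preimage hM.right_injective.injOn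
  refine (hleft.union hright).subset fun u hu ↦ ?_
  obtain ⟨huv, hvu⟩ := (hM.mem_iff u v).mp hu
  rcases le_total (a v) (a u) with ha | ha
  · exact Or.inl ⟨ha, huv⟩
  · exact Or.inr ⟨hvu, hM.right_le_right ha⟩

theorem isUmbrellaOrdered (hM : IsProperEndpointModel G a b) :
    letI := LinearOrder.lift' a hM.left_injective
    IsUmbrellaOrdered G := by
  intro x y z (hxy : a x ≤ a y) (hyz : a y ≤ a z) hxz
  obtain ⟨-, hzx⟩ := (hM.mem_iff x z).mp hxz
  rw [hM.mem_iff, hM.mem_iff]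
  exact ⟨⟨hyz.trans hzx, hxy.trans (hM.left_le_right y)⟩,
    ⟨hyz.trans (hM.left_le_right z), hzx.trans (hM.right_le_right hxy)⟩⟩

end IsProperEndpointModel

/-- `σ` is a twist of `G` if `v ↦ N_G[σ v]` is the closed neighborhood family of some simple graph;
symmetry of that graph is stated as self-adjointness of `σ` for closed adjacency in `G`. -/
structure IsTwist {V : Type*} (G : SimpleGraph V) (σ : Equiv.Perm V) : Prop where
  mem_apply : ∀ v, v ∈ ClosedNbhd G (σ v)
  mem_apply_iff : ∀ u v, u ∈ ClosedNbhd G (σ v) ↔ σ u ∈ ClosedNbhd G v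

/-- A drift of `σ` is a pair `u < w` witnessing the failure of `N_G[w] ⊆ N_G[σ w]`; for a twist it
makes the forward orbit of `u` descend. -/
structure IsDrift {V : Type*} [LT V] (G : SimpleGraph V) (σ : Equiv.Perm V) (u w : V) :
    Prop where
  lt : u < w
  mem : u ∈ ClosedNbhd G w
  notMem : u ∉ ClosedNbhd G (σ w)

namespace IsTwist

variable {V : Type*} {G H : SimpleGraph V} {σ : Equiv.Perm V} {u w : V}

theorem of_closedNbhd_eq (h : ∀ v, ClosedNbhd H v = ClosedNbhd G (σ v)) : IsTwist G σ where
  mem_apply v := h v ▸ self_mem_closedNbhd H v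
  mem_apply_iff u v := by rw [← h v, mem_closedNbhd_comm, h u, mem_closedNbhd_comm]

theorem symm (hσ : IsTwist G σ) : IsTwist G σ.symm where
  mem_apply v := by
    simpa only [σ.apply_symm_apply, mem_closedNbhd_comm] using hσ.mem_apply (σ.symm v)
  mem_apply_iff u v := by
    simpa only [σ.apply_symm_apply] using (hσ.mem_apply_iff (σ.symm u) (σ.symm v)).symm

theorem mem_closedNbhd_iterate (hσ : IsTwist G σ) (n : ℕ) (u : V) :
    u ∈ ClosedNbhd G (σ^[n] u) := by
  induction n using Nat.twoStepInduction generalizing u with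
  | zero => exact self_mem_closedNbhd G u
  | one => exact hσ.mem_apply u
  | more n ih _ =>
    rw [Function.iterate_succ_apply', hσ.mem_apply_iff, Function.iterate_succ_apply]
    exact ih (σ u)

section LinearOrder

variable [LinearOrder V]

theorem apply_notMem_of_isDrift (hσ : IsTwist G σ) (hd : IsDrift G σ u w) :
    σ u ∉ ClosedNbhd G w :=
  fun hmem ↦ hd.notMem ((hσ.mem_apply_iff u w).mpr hmem)

theorem apply_lt_of_isDrift (hσ : IsTwist G σ) (hG : IsUmbrellaOrdered G)
    (hd : IsDrift G σ u w) : σ u < u := by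
  have hnot := hσ.apply_notMem_of_isDrift hd
  by_contra! hle
  rcases le_total (σ u) w with hw | hw
  · exact hnot (hG hle hw hd.mem).2
  · exact hnot (mem_closedNbhd_comm.mp (hG hd.lt.le hw (hσ.mem_apply u)).2)

theorem isDrift_apply_symm (hσ : IsTwist G σ) (hG : IsUmbrellaOrdered G)
    (hd : IsDrift G σ u w) : IsDrift G σ (σ u) (σ.symm w) := by
  have hnot := hσ.apply_notMem_of_isDrift hd
  refine ⟨?_, ?_, ?_⟩
  · by_contra! hle
    have huw : σ u ≤ w := ((hσ.apply_lt_of_isDrift hG hd).trans hd.lt).le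
    exact hnot (hG hle huw (mem_closedNbhd_comm.mp (hσ.symm.mem_apply w))).2
  · rw [← hσ.mem_apply_iff, σ.apply_symm_apply]
    exact hd.mem
  · rwa [σ.apply_symm_apply]

theorem isDrift_iterate (hσ : IsTwist G σ) (hG : IsUmbrellaOrdered G) (hd : IsDrift G σ u w)
    (n : ℕ) : IsDrift G σ (σ^[n] u) (σ.symm^[n] w) := by
  induction n with
  | zero => exact hd
  | succ n ih =>
    rw [Function.iterate_succ_apply', Function.iterate_succ_apply']
    exact hσ.isDrift_apply_symm hG ih

theorem not_isDrift (hσ : IsTwist G σ) (hG : IsUmbrellaOrdered G)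
    (hfin : (ClosedNbhd G u).Finite) : ¬ IsDrift G σ u w := by
  intro hd
  have hanti : StrictAnti fun n ↦ σ^[n] u := strictAnti_nat_of_succ_lt fun n ↦ by
    rw [Function.iterate_succ_apply']
    exact hσ.apply_lt_of_isDrift hG (hσ.isDrift_iterate hG hd n)
  refine Set.infinite_range_of_injective hanti.injective (hfin.subset ?_)
  rintro _ ⟨n, rfl⟩
  exact mem_closedNbhd_comm.mp (hσ.mem_closedNbhd_iterate n u)

theorem closedNbhd_subset_apply (hσ : IsTwist G σ) (hG : IsUmbrellaOrdered G)
    (hfin : ∀ v, (ClosedNbhd G v).Finite) (w : V) : ClosedNbhd G w ⊆ ClosedNbhd G (σ w) := by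
  intro u hu
  by_contra hnot
  rcases lt_trichotomy u w with huw | rfl | hwu
  · exact hσ.not_isDrift hG (hfin u) ⟨huw, hu, hnot⟩
  · exact hnot (hσ.mem_apply u)
  · refine hσ.not_isDrift hG (hfin w) ⟨hwu, mem_closedNbhd_comm.mp hu, fun hwσ ↦ hnot ?_⟩
    rwa [mem_closedNbhd_comm, ← hσ.mem_apply_iff]

theorem closedNbhd_apply (hσ : IsTwist G σ) (hG : IsUmbrellaOrdered G)
    (hfin : ∀ v, (ClosedNbhd G v).Finite) (v : V) : ClosedNbhd G (σ v) = ClosedNbhd G v := by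
  refine Set.Subset.antisymm ?_ (hσ.closedNbhd_subset_apply hG hfin v)
  simpa only [σ.symm_apply_apply] using hσ.symm.closedNbhd_subset_apply hG hfin (σ v)

end LinearOrder

end IsTwist

theorem stmt17_general {V : Type*} (G H : SimpleGraph V) (hG : IsProperIntervalGraph G)
    (σ : Equiv.Perm V) (h : ∀ v, ClosedNbhd H v = ClosedNbhd G (σ v)) : H = G := by
  obtain ⟨a, b, hM⟩ := hG.exists_endpointModel
  let _ : LinearOrder V := LinearOrder.lift' a hM.left_injective
  have hσ : IsTwist G σ := .of_closedNbhd_eq h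
  refine closedNbhd_injective (funext fun v ↦ ?_)
  rw [h v, hσ.closedNbhd_apply hM.isUmbrellaOrdered hM.finite_closedNbhd v]

/-- A proper interval graph `G` is exactly reconstructible from its
closed neighborhood hypergraph: if `H` is any graph on the same vertex set with
`N_H[v] = N_G[σ(v)]` for a permutation `σ`, then `H = G`. -/
theorem stmt17 {V : Type*} [Fintype V] (G H : SimpleGraph V)
    (hG : IsProperIntervalGraph G) (σ : Equiv.Perm V)
    (h : ∀ v, ClosedNbhd H v = ClosedNbhd G (σ v)) :
    H = G :=
  stmt17_general G H hG σ h
end
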